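/- arXiv:1601.03489 — 2 statements merged into one kernel-verified Lean document; each statement's English description precedes it below -/
import Mathlib

section
/- Let Q be a q-matrix on F with the given block structure, n ≥ 1, and ₙQ its LC-block-augmented truncation. Let π, ₙπ : F → [0,∞) be probability vectors with ₙπ(k,i) = 0 whenever k > n. Let f : F → [1,∞) with Σ_{x} π(x) f(x) < ∞, v : F → [0,∞), and C ≥ 0. Assume hypotheses (a), (b), (c): (a) for every x ∈ F, Σ_{y} |d(x;y)| f(y) < ∞, and for every g : F → ℝ with 0 ≤ g ≤ f pointwise and every x ∈ F, Σ_{y} |d(x;y)| g(y) ≤ (Σ_{z} π(z) g(z) + 1)(v(x) + C); (b) for every (k,i) ∈ F_n, Σ_{(m,j)∈F̄_n} q(k,i;m,j) v(m,j) < ∞; (c) for every y ∈ F, ₙπ(y) − π(y) = Σ_{x∈F} Σ_{z∈F} ₙπ(x)(ₙq(x;z) − q(x;z)) d(z;y), all series converging absolutely. Then for every g : F → ℝ with 1 ≤ g(x) ≤ f(x) for all x ∈ F, Σ_{y} |π(y) − ₙπ(y)| g(y) ≤ E(n) · Σ_{z} π(z) g(z), where E(n) := 2 Σ_{(k,i)∈F_n}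 ₙπ(k,i) Σ_{(m,j)∈F̄_n} q(k,i;m,j) (v(m,j) + v(n,j) + 2C). -/
/-!
For `x ∈ F_n` the perturbation is a superposition of redirections,
`ₙQ(x, ·) - Q(x, ·) = Σ_{y ∈ F̄_n} q(x; y) (δ_{(n, j)} - δ_y)` with `y = (m, j)`,
so integrating a weight `w ≥ 0` against its absolute value costs at most
`Σ_{y ∈ F̄_n} q(x; y) (w(m, j) + w(n, j))`. Taking absolute values in `ₙπ - π = ₙπ (ₙQ - Q) D`,
integrating against `g` and exchanging the sums, the row bound on `D` provides the weight
`w = (πg + 1) (v + C) ≤ 2 (πg) (v + C)`, where `πg ≥ 1` because `g ≥ 1`. The exchanges are made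
in `ℝ≥0∞`.
-/

/-- The block-structured state space `F = ⋃_{k≥0} L_k`, where
`L_0 = {0} × {0,…,S₀}` and `L_k = {k} × {0,…,S₁}` for `k ≥ 1`. -/
abbrev BState (S0 S1 : ℕ) : Type := {p : ℕ × ℕ // p.2 ≤ if p.1 = 0 then S0 else S1}

/-- A (stable) q-matrix. -/
def IsQMatrix {α : Type*} (q : α → α → ℝ) : Prop :=
  (∀ x y : α, x ≠ y → 0 ≤ q x y) ∧
    ∀ x : α, Summable (fun y : {z : α // z ≠ x} => q x (y : α)) ∧
      (∑' y : {z : α // z ≠ x}, q x (y : α)) ≤ - q x x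

/-- The last-column-block-augmented northwest-corner truncation `ₙQ` of `Q`. -/
noncomputable def LCtrunc (S0 S1 n : ℕ) (q : BState S0 S1 → BState S0 S1 → ℝ)
    (x y : BState S0 S1) : ℝ :=
  if y.1.1 < n then q x y
  else if y.1.1 = n then
    q x y + ∑' m : ℕ,
      if h : (n < m ∧ m ≠ x.1.1) ∧ y.1.2 ≤ (if m = 0 then S0 else S1)
        then q x ⟨(m, y.1.2), h.2⟩ else 0
  else if y.1.1 = x.1.1 then q x y else 0

/-- The value of `v` at state `(k, j)`, when `(k, j) ∈ F` (otherwise `0`). -/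
noncomputable def vAt (S0 S1 : ℕ) (v : BState S0 S1 → ℝ) (k j : ℕ) : ℝ :=
  if h : j ≤ (if k = 0 then S0 else S1) then v ⟨(k, j), h⟩ else 0

/-- The error decay function
`E(n) = 2 Σ_{(k,i)∈F_n} ₙπ(k,i) Σ_{(m,j)∈F̄_n} q(k,i;m,j) (v(m,j) + v(n,j) + 2C)`. -/
noncomputable def Efun (S0 S1 n : ℕ) (q : BState S0 S1 → BState S0 S1 → ℝ)
    (npi v : BState S0 S1 → ℝ) (C : ℝ) : ℝ :=
  2 * ∑' x : BState S0 S1,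
    (if x.1.1 ≤ n then
      npi x * ∑' y : BState S0 S1,
        (if n < y.1.1 then q x y * (v y + vAt S0 S1 v n y.1.2 + 2 * C) else 0)
     else 0)

open scoped ENNReal

lemma tsum_enorm_mul_le_of_hasSum {α β γ R : Type*} [NonUnitalNormedRing R] {a : α → R}
    {K : α → β → R} {D : β → γ → R} {ν : γ → R}
    (h : ∀ y, HasSum (fun p : α × β => a p.1 * K p.1 p.2 * D p.2 y) (ν y)) (g : γ → ℝ≥0∞) :
    ∑' y, ‖ν y‖ₑ * g y ≤ ∑' x, ‖a x‖ₑ * ∑' z, ‖K x z‖ₑ * ∑' y, ‖D z y‖ₑ * g y := by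
  have enorm_le (y : γ) : ‖ν y‖ₑ ≤ ∑' x, ∑' z, ‖a x‖ₑ * ‖K x z‖ₑ * ‖D z y‖ₑ := by
    rw [← (h y).tsum_eq, ← ENNReal.tsum_prod (f := fun x z => ‖a x‖ₑ * ‖K x z‖ₑ * ‖D z y‖ₑ)]
    refine enorm_tsum_le_tsum_enorm.trans (ENNReal.tsum_le_tsum fun p => ?_)
    simp only [enorm, ← ENNReal.coe_mul]
    exact ENNReal.coe_le_coe.2 ((nnnorm_mul_le _ _).trans (mul_le_mul_left (nnnorm_mul_le _ _) _))
  calc ∑' y, ‖ν y‖ₑ * g y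
      ≤ ∑' y, ∑' x, ∑' z, ‖a x‖ₑ * (‖K x z‖ₑ * (‖D z y‖ₑ * g y)) := by
        refine ENNReal.tsum_le_tsum fun y => (mul_le_mul_left (enorm_le y) _).trans_eq ?_
        simp only [← ENNReal.tsum_mul_right, mul_assoc]
    _ = ∑' x, ∑' z, ∑' y, ‖a x‖ₑ * (‖K x z‖ₑ * (‖D z y‖ₑ * g y)) := by
        rw [ENNReal.tsum_comm]
        exact tsum_congr fun x => ENNReal.tsum_comm
    _ = ∑' x, ‖a x‖ₑ * ∑' z, ‖K x z‖ₑ * ∑' y, ‖D z y‖ₑ * g y := by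
        simp only [ENNReal.tsum_mul_left]

lemma tsum_ofReal_abs_mul {α : Type*} (a g : α → ℝ) :
    ∑' y, ENNReal.ofReal (|a y| * g y) = ∑' y, ‖a y‖ₑ * ENNReal.ofReal (g y) :=
  tsum_congr fun y => by rw [ENNReal.ofReal_mul (abs_nonneg _), Real.enorm_eq_ofReal_abs]

lemma tsum_enorm_mul_ofReal_le {α : Type*} {a g : α → ℝ} (hg : ∀ y, 0 ≤ g y)
    (hag : Summable fun y => |a y| * g y) {r : ℝ} (h : ∑' y, |a y| * g y ≤ r) :
    ∑' y, ‖a y‖ₑ * ENNReal.ofReal (g y) ≤ ENNReal.ofReal r := by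
  rw [← tsum_ofReal_abs_mul,
    ← ENNReal.ofReal_tsum_of_nonneg (fun y => mul_nonneg (abs_nonneg _) (hg y)) hag]
  exact ENNReal.ofReal_le_ofReal h

lemma tsum_abs_mul_le_of_tsum_enorm_mul_le {α : Type*} {a g : α → ℝ} (hg : ∀ y, 0 ≤ g y) {r : ℝ}
    (hr : 0 ≤ r) (h : ∑' y, ‖a y‖ₑ * ENNReal.ofReal (g y) ≤ ENNReal.ofReal r) :
    ∑' y, |a y| * g y ≤ r := by
  rw [← tsum_ofReal_abs_mul] at h
  have := ENNReal.toReal_le_of_le_ofReal hr h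
  rwa [ENNReal.tsum_toReal_eq fun _ => ENNReal.ofReal_ne_top,
    tsum_congr fun y => ENNReal.toReal_ofReal (mul_nonneg (abs_nonneg (a y)) (hg y))] at this

lemma summable_mul_of_le {α : Type*} {a g f : α → ℝ} (ha : ∀ x, 0 ≤ a x)
    (hg : ∀ x, 0 ≤ g x) (hgf : ∀ x, g x ≤ f x) (hf : Summable fun x => a x * f x) :
    Summable fun x => a x * g x :=
  hf.of_nonneg_of_le (fun x => mul_nonneg (ha x) (hg x))
    fun x => mul_le_mul_of_nonneg_left (hgf x) (ha x)

lemma hasSum_of_eq_tsum_tsum {α β : Type*} {F : α × β → ℝ} (hF : Summable fun p => |F p|) {s : ℝ}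
    (hs : s = ∑' x, ∑' z, F (x, z)) : HasSum F s := by
  rw [hs, ← hF.of_abs.tsum_prod]
  exact hF.of_abs.hasSum

lemma IsQMatrix.summable_row {α : Type*} {q : α → α → ℝ} (hq : IsQMatrix q) (x : α) :
    Summable (q x) :=
  (Set.finite_singleton x).summable_compl_iff.1 (hq.2 x).1

section

variable {S0 S1 n : ℕ}

namespace BState

lemma finite_level_le (n : ℕ) : {x : BState S0 S1 | x.1.1 ≤ n}.Finite := by
  refine ((Set.finite_Iic (n, S0 + S1)).preimage Subtype.val_injective.injOn).subset ?_
  intro x (hx : x.1.1 ≤ n)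
  have hphase := x.2
  refine ⟨hx, show x.1.2 ≤ S0 + S1 from ?_⟩
  split_ifs at hphase <;> omega

lemma summable_mul_of_vanish {μ : BState S0 S1 → ℝ}
    (hvanish : ∀ x : BState S0 S1, n < x.1.1 → μ x = 0) (F : BState S0 S1 → ℝ) :
    Summable fun x => μ x * F x :=
  summable_of_hasFiniteSupport <| (finite_level_le n).subset fun x hx =>
    not_lt.1 (mt (hvanish x) (left_ne_zero_of_mul hx))

/-- The set `F̄_n` of states above level `n`. -/
def above (S0 S1 n : ℕ) : Set (BState S0 S1) := {y | n < y.1.1}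

lemma tsum_above (F : BState S0 S1 → ℝ) :
    ∑' y : above S0 S1 n, F y = ∑' y : BState S0 S1, if n < y.1.1 then F y else 0 := by
  rw [tsum_subtype]
  simp only [Set.indicator_apply, above, Set.mem_ofPred_eq]

lemma summable_above_iff {F : BState S0 S1 → ℝ} :
    (Summable fun y : above S0 S1 n => F y) ↔
      Summable fun y : BState S0 S1 => if n < y.1.1 then F y else 0 := by
  refine summable_subtype_iff_indicator.trans (Eq.to_iff (congrArg Summable ?_))
  ext y
  simp only [Set.indicator_apply, above, Set.mem_ofPred_eq]

/-- The state `(n, j)` to which the LC-block-augmented truncation redirects the transitions into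
`(m, j)`, `m > n`. The phase `j` exists at level `n` because neither level is `0`. -/
def redirect (hn : 1 ≤ n) (y : above S0 S1 n) : BState S0 S1 :=
  ⟨(n, y.1.1.2), by
    have hlevel : n < y.1.1.1 := y.2
    have hphase := y.1.2
    rw [if_neg (by omega)] at hphase
    rwa [if_neg (by omega)]⟩

lemma redirect_eq_iff (hn : 1 ≤ n) (y : above S0 S1 n) {z : BState S0 S1} :
    redirect hn y = z ↔ z.1.1 = n ∧ y.1.1.2 = z.1.2 := by
  rw [Subtype.ext_iff, Prod.ext_iff, eq_comm (a := z.1.1)]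
  rfl

lemma vAt_redirect (hn : 1 ≤ n) (v : BState S0 S1 → ℝ) (y : above S0 S1 n) :
    vAt S0 S1 v n y.1.1.2 = v (redirect hn y) :=
  dif_pos (redirect hn y).2

lemma exists_abs_redirect_le (hn : 1 ≤ n) (w : BState S0 S1 → ℝ) :
    ∃ B, ∀ y : above S0 S1 n, |w (redirect hn y)| ≤ B := by
  obtain ⟨B, hB⟩ := ((finite_level_le n).image fun x : BState S0 S1 => |w x|).bddAbove
  exact ⟨B, fun y => hB ⟨redirect hn y, le_refl n, rfl⟩⟩

end BState

open BState

variable {q : BState S0 S1 → BState S0 S1 → ℝ} {x : BState S0 S1}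

lemma IsQMatrix.nonneg_of_above (hq : IsQMatrix q) (hx : x.1.1 ≤ n) (y : above S0 S1 n) :
    0 ≤ q x y :=
  hq.1 x y fun h => (hx.trans_lt y.2).ne (congrArg (·.1.1) h)

lemma tsum_level_eq_tsum_redirect (hn : 1 ≤ n) (hx : x.1.1 ≤ n) {z : BState S0 S1}
    (hz : z.1.1 = n) :
    (∑' m : ℕ, if h : (n < m ∧ m ≠ x.1.1) ∧ z.1.2 ≤ (if m = 0 then S0 else S1)
      then q x ⟨(m, z.1.2), h.2⟩ else 0) =
      ∑' y : above S0 S1 n, if redirect hn y = z then q x y else 0 := by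
  let fiber : Set (above S0 S1 n) := {y | redirect hn y = z}
  have phase_eq (y : fiber) : y.1.1.1.2 = z.1.2 := ((redirect_eq_iff hn _).1 y.2).2
  have level_injective : Function.Injective fun y : fiber => y.1.1.1.1 := fun y y' h =>
    Subtype.ext <| Subtype.ext <| Subtype.ext <| Prod.ext h ((phase_eq y).trans (phase_eq y').symm)
  calc _ = ∑' y : fiber, q x y.1 := by
        rw [← level_injective.tsum_eq]
        · refine tsum_congr fun y => ?_
          have hy : n < y.1.1.1.1 := y.1.2
          have hphase := y.1.1.2
          rw [phase_eq y] at hphase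
          rw [dif_pos ⟨⟨hy, by omega⟩, hphase⟩]
          exact congrArg (q x) (Subtype.ext (Prod.ext rfl (phase_eq y).symm))
        · intro m hm
          obtain ⟨h, -⟩ := dite_ne_right_iff.1 hm
          exact ⟨⟨⟨⟨(m, z.1.2), h.2⟩, h.1.1⟩, (redirect_eq_iff hn _).2 ⟨hz, rfl⟩⟩, rfl⟩
    _ = ∑' y : above S0 S1 n, if redirect hn y = z then q x y else 0 := by
        rw [tsum_subtype fiber fun y => q x y]
        simp only [fiber, Set.indicator_apply, Set.mem_ofPred_eq]

lemma LCtrunc_sub_eq_tsum (hn : 1 ≤ n) (hx : x.1.1 ≤ n) (z : BState S0 S1) :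
    LCtrunc S0 S1 n q x z - q x z = ∑' y : above S0 S1 n,
      q x y * ((if redirect hn y = z then 1 else 0) - if (y : BState S0 S1) = z then 1 else 0) := by
  by_cases hz : n < z.1.1
  · have redirect_ne (y : above S0 S1 n) : redirect hn y ≠ z := fun h =>
      hz.ne' ((redirect_eq_iff hn y).1 h).1
    rw [tsum_eq_single (⟨z, hz⟩ : above S0 S1 n)
      fun y hy => by simp [redirect_ne, Subtype.coe_ne_coe.2 hy]]
    simp [LCtrunc, redirect_ne, hz.not_gt, hz.ne', (hx.trans_lt hz).ne']
  · have coe_ne (y : above S0 S1 n) : (y : BState S0 S1) ≠ z := fun h => hz (h ▸ y.2)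
    simp only [coe_ne, if_false, sub_zero, mul_ite, mul_one, mul_zero]
    rcases (not_lt.1 hz).lt_or_eq with hlt | heq
    · simp [LCtrunc, hlt, redirect_eq_iff, hlt.ne]
    · rw [← tsum_level_eq_tsum_redirect hn hx heq]
      simp [LCtrunc, heq]

/-- The cost, for the weight `w`, of redirecting the transitions from `x` into `F̄_n`: each state
`y ∈ F̄_n` is charged `w` both at `y` and at the target of its redirection. It bounds the `w`-norm
of row `x` of `ₙQ - Q`, and `E(n)` averages it over `ₙπ`. -/
noncomputable def redirectCost (hn : 1 ≤ n) (q : BState S0 S1 → BState S0 S1 → ℝ)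
    (w : BState S0 S1 → ℝ) (x : BState S0 S1) : ℝ :=
  ∑' y : above S0 S1 n, q x y * (w y + w (redirect hn y))

lemma redirectCost_nonneg (hn : 1 ≤ n) (hq : IsQMatrix q) {w : BState S0 S1 → ℝ}
    (hw : ∀ z, 0 ≤ w z) (hx : x.1.1 ≤ n) : 0 ≤ redirectCost hn q w x :=
  tsum_nonneg fun y => mul_nonneg (hq.nonneg_of_above hx y) (add_nonneg (hw _) (hw _))

lemma summable_redirectCost (hn : 1 ≤ n) (hq : IsQMatrix q) {w : BState S0 S1 → ℝ}
    (hqw : Summable fun y : above S0 S1 n => q x y * w y) :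
    Summable fun y : above S0 S1 n => q x y * (w y + w (redirect hn y)) := by
  obtain ⟨B, hB⟩ := exists_abs_redirect_le hn w
  have hq_redirect : Summable fun y : above S0 S1 n => q x y * w (redirect hn y) :=
    (((hq.summable_row x).subtype _).abs.mul_right B).of_norm_bounded fun y => by
      rw [norm_mul]
      exact mul_le_mul_of_nonneg_left (hB y) (norm_nonneg _)
  simpa only [mul_add] using hqw.add hq_redirect

lemma tsum_enorm_LCtrunc_sub_mul_le (hn : 1 ≤ n) (hx : x.1.1 ≤ n) (W : BState S0 S1 → ℝ≥0∞) :
    ∑' z, ‖LCtrunc S0 S1 n q x z - q x z‖ₑ * W z ≤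
      ∑' y : above S0 S1 n, ‖q x y‖ₑ * (W y + W (redirect hn y)) := by
  have enorm_le (z : BState S0 S1) : ‖LCtrunc S0 S1 n q x z - q x z‖ₑ ≤ ∑' y : above S0 S1 n,
      ‖q x y‖ₑ * ((if (y : BState S0 S1) = z then 1 else 0) +
        if redirect hn y = z then 1 else 0) := by
    rw [LCtrunc_sub_eq_tsum hn hx]
    refine enorm_tsum_le_tsum_enorm.trans (ENNReal.tsum_le_tsum fun y => ?_)
    rw [enorm_mul, add_comm]
    gcongr
    refine enorm_sub_le.trans_eq ?_
    split_ifs <;> simp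
  calc ∑' z, ‖LCtrunc S0 S1 n q x z - q x z‖ₑ * W z
      ≤ ∑' z, (∑' y : above S0 S1 n, ‖q x y‖ₑ * ((if (y : BState S0 S1) = z then 1 else 0) +
          if redirect hn y = z then 1 else 0)) * W z :=
        ENNReal.tsum_le_tsum fun z => mul_le_mul_left (enorm_le z) _
    _ = ∑' y : above S0 S1 n, ‖q x y‖ₑ * ∑' z, ((if (y : BState S0 S1) = z then 1 else 0) +
          if redirect hn y = z then 1 else 0) * W z := by
        simp only [← ENNReal.tsum_mul_right, ← ENNReal.tsum_mul_left, mul_assoc]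
        exact ENNReal.tsum_comm
    _ = ∑' y : above S0 S1 n, ‖q x y‖ₑ * (W y + W (redirect hn y)) := by
        simp only [add_mul, ite_mul, one_mul, zero_mul, ENNReal.tsum_add, tsum_ite_eq']

lemma tsum_enorm_LCtrunc_sub_mul_ofReal_le (hn : 1 ≤ n) (hq : IsQMatrix q)
    {w : BState S0 S1 → ℝ} (hw : ∀ z, 0 ≤ w z) (hx : x.1.1 ≤ n)
    (hqw : Summable fun y : above S0 S1 n => q x y * w y) :
    ∑' z, ‖LCtrunc S0 S1 n q x z - q x z‖ₑ * ENNReal.ofReal (w z) ≤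
      ENNReal.ofReal (redirectCost hn q w x) := by
  have hq0 := hq.nonneg_of_above hx
  rw [redirectCost, ENNReal.ofReal_tsum_of_nonneg
    (fun y => mul_nonneg (hq0 y) (add_nonneg (hw _) (hw _))) (summable_redirectCost hn hq hqw)]
  refine (tsum_enorm_LCtrunc_sub_mul_le hn hx _).trans_eq (tsum_congr fun y => ?_)
  rw [ENNReal.ofReal_mul (hq0 y), ENNReal.ofReal_add (hw _) (hw _), Real.enorm_of_nonneg (hq0 y)]

lemma tsum_abs_mul_le_tsum_redirectCost (hn : 1 ≤ n) (hq : IsQMatrix q)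
    {d : BState S0 S1 → BState S0 S1 → ℝ} {npi ν g w : BState S0 S1 → ℝ}
    (hnpi0 : ∀ x, 0 ≤ npi x) (hvanish : ∀ x : BState S0 S1, n < x.1.1 → npi x = 0)
    (hg0 : ∀ y, 0 ≤ g y) (hdg : ∀ z, Summable fun y => |d z y| * g y)
    (hdw : ∀ z, ∑' y, |d z y| * g y ≤ w z)
    (hqw : ∀ x : BState S0 S1, x.1.1 ≤ n → Summable fun y : above S0 S1 n => q x y * w y)
    (hν : ∀ y, HasSum (fun p : BState S0 S1 × BState S0 S1 =>
      npi p.1 * (LCtrunc S0 S1 n q p.1 p.2 - q p.1 p.2) * d p.2 y) (ν y)) :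
    ∑' y, |ν y| * g y ≤ ∑' x, npi x * redirectCost hn q w x := by
  have hw (z) : 0 ≤ w z :=
    (tsum_nonneg fun y => mul_nonneg (abs_nonneg _) (hg0 y)).trans (hdw z)
  have hterm0 (x) : 0 ≤ npi x * redirectCost hn q w x := by
    rcases le_or_gt x.1.1 n with hx | hx
    · exact mul_nonneg (hnpi0 x) (redirectCost_nonneg hn hq hw hx)
    · rw [hvanish x hx, zero_mul]
  refine tsum_abs_mul_le_of_tsum_enorm_mul_le hg0 (tsum_nonneg hterm0) ?_
  rw [ENNReal.ofReal_tsum_of_nonneg hterm0 (summable_mul_of_vanish hvanish _)]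
  refine (tsum_enorm_mul_le_of_hasSum
    (K := fun x z => LCtrunc S0 S1 n q x z - q x z) hν _).trans (ENNReal.tsum_le_tsum fun x => ?_)
  rcases le_or_gt x.1.1 n with hx | hx
  · rw [ENNReal.ofReal_mul (hnpi0 x), Real.enorm_of_nonneg (hnpi0 x)]
    gcongr
    calc ∑' z, ‖LCtrunc S0 S1 n q x z - q x z‖ₑ * ∑' y, ‖d z y‖ₑ * ENNReal.ofReal (g y)
        ≤ ∑' z, ‖LCtrunc S0 S1 n q x z - q x z‖ₑ * ENNReal.ofReal (w z) := by
          gcongr with z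
          exact tsum_enorm_mul_ofReal_le hg0 (hdg z) (hdw z)
      _ ≤ ENNReal.ofReal (redirectCost hn q w x) :=
          tsum_enorm_LCtrunc_sub_mul_ofReal_le hn hq hw hx (hqw x hx)
  · simp [hvanish x hx]

lemma Efun_mul_eq_tsum_redirectCost (hn : 1 ≤ n) {npi : BState S0 S1 → ℝ}
    (hvanish : ∀ x : BState S0 S1, n < x.1.1 → npi x = 0) (v : BState S0 S1 → ℝ) (C A : ℝ) :
    Efun S0 S1 n q npi v C * A =
      ∑' x, npi x * redirectCost hn q (fun z => 2 * A * (v z + C)) x := by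
  rw [Efun, mul_right_comm, ← tsum_mul_left]
  refine tsum_congr fun x => ?_
  split_ifs with hx
  · rw [mul_left_comm, ← tsum_above, ← tsum_mul_left, redirectCost]
    congr 1
    refine tsum_congr fun y => ?_
    rw [vAt_redirect hn]
    ring
  · rw [hvanish x (not_le.1 hx), zero_mul, mul_zero]

theorem stmt4_general (hn : 1 ≤ n) {d : BState S0 S1 → BState S0 S1 → ℝ} (hq : IsQMatrix q)
    {pi npi : BState S0 S1 → ℝ} (hpi0 : ∀ x, 0 ≤ pi x) (hpi1 : (∑' x, pi x) = 1)
    (hnpi0 : ∀ x, 0 ≤ npi x) (hvanish : ∀ x : BState S0 S1, n < x.1.1 → npi x = 0)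
    {g : BState S0 S1 → ℝ} (hg : ∀ y, 1 ≤ g y) (hpig : Summable fun z => pi z * g z)
    (hdg : ∀ x, Summable fun y => |d x y| * g y) {v : BState S0 S1 → ℝ} {C : ℝ}
    (hdv : ∀ x, (∑' y, |d x y| * g y) ≤ ((∑' z, pi z * g z) + 1) * (v x + C))
    (hqv : ∀ x : BState S0 S1, x.1.1 ≤ n →
      Summable fun y : BState S0 S1 => if n < y.1.1 then q x y * v y else 0)
    (hdiff : ∀ y, HasSum (fun p : BState S0 S1 × BState S0 S1 =>
      npi p.1 * (LCtrunc S0 S1 n q p.1 p.2 - q p.1 p.2) * d p.2 y) (npi y - pi y)) :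
    (∑' y, |pi y - npi y| * g y) ≤ Efun S0 S1 n q npi v C * ∑' z, pi z * g z := by
  set A := ∑' z, pi z * g z
  have hg0 (y) : 0 ≤ g y := zero_le_one.trans (hg y)
  have hpi_summable : Summable pi := by
    simpa only [mul_one] using summable_mul_of_le hpi0 (fun _ => zero_le_one) hg hpig
  have one_le_A : 1 ≤ A := hpi1 ▸
    hpi_summable.tsum_le_tsum (fun z => le_mul_of_one_le_right (hpi0 z) (hg z)) hpig
  have hvC (x) : 0 ≤ v x + C := nonneg_of_mul_nonneg_right
    ((tsum_nonneg fun y => mul_nonneg (abs_nonneg _) (hg0 y)).trans (hdv x)) (by linarith)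
  have hdw (x) : ∑' y, |d x y| * g y ≤ 2 * A * (v x + C) :=
    (hdv x).trans (mul_le_mul_of_nonneg_right (by linarith) (hvC x))
  have hqw (x : BState S0 S1) (hx : x.1.1 ≤ n) :
      Summable fun y : above S0 S1 n => q x y * (2 * A * (v y + C)) := by
    have hqC := ((hq.summable_row x).subtype (above S0 S1 n)).mul_right C
    refine (((summable_above_iff.2 (hqv x hx)).add hqC).mul_left (2 * A)).congr fun y => ?_
    simp only [Function.comp_apply]
    ring
  simp only [abs_sub_comm (pi _)]
  rw [Efun_mul_eq_tsum_redirectCost hn hvanish]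
  exact tsum_abs_mul_le_tsum_redirectCost hn hq hnpi0 hvanish hg0 hdg hdw hqw hdiff

end

/-- The relative-error bound (2.19) of the paper's Theorem 2.1, in per-function
form over functions `g` with `e ≤ g ≤ f`. -/
theorem stmt4 (S0 S1 : ℕ) (n : ℕ) (hn : 1 ≤ n)
    (q d : BState S0 S1 → BState S0 S1 → ℝ) (hq : IsQMatrix q)
    (pi npi : BState S0 S1 → ℝ)
    (hpi0 : ∀ x, 0 ≤ pi x) (hpi1 : (∑' x, pi x) = 1)
    (hnpi0 : ∀ x, 0 ≤ npi x) (hnpi1 : (∑' x, npi x) = 1)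
    (hvanish : ∀ x : BState S0 S1, n < x.1.1 → npi x = 0)
    (f : BState S0 S1 → ℝ) (hf : ∀ x, 1 ≤ f x)
    (hpif : Summable (fun x => pi x * f x))
    (v : BState S0 S1 → ℝ) (hv : ∀ x, 0 ≤ v x)
    (C : ℝ) (hC : 0 ≤ C)
    (ha1 : ∀ x, Summable (fun y => |d x y| * f y))
    (ha2 : ∀ g : BState S0 S1 → ℝ, (∀ y, 0 ≤ g y ∧ g y ≤ f y) → ∀ x,
      (∑' y, |d x y| * g y) ≤ ((∑' z, pi z * g z) + 1) * (v x + C))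
    (hb : ∀ x : BState S0 S1, x.1.1 ≤ n →
      Summable (fun y : BState S0 S1 => if n < y.1.1 then q x y * v y else 0))
    (hc : ∀ y : BState S0 S1,
      Summable (fun p : BState S0 S1 × BState S0 S1 =>
        |npi p.1 * (LCtrunc S0 S1 n q p.1 p.2 - q p.1 p.2) * d p.2 y|) ∧
      npi y - pi y =
        ∑' x : BState S0 S1, ∑' z : BState S0 S1,
          npi x * (LCtrunc S0 S1 n q x z - q x z) * d z y)
    (g : BState S0 S1 → ℝ) (hg : ∀ y, 1 ≤ g y ∧ g y ≤ f y) :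
    (∑' y, |pi y - npi y| * g y) ≤
      Efun S0 S1 n q npi v C * ∑' z, pi z * g z := by
  have hg0 (y) : 0 ≤ g y := zero_le_one.trans (hg y).1
  have hgf (y) : g y ≤ f y := (hg y).2
  exact stmt4_general hn hq hpi0 hpi1 hnpi0 hvanish (fun y => (hg y).1)
    (summable_mul_of_le hpi0 hg0 hgf hpif)
    (fun x => summable_mul_of_le (fun _ => abs_nonneg _) hg0 hgf (ha1 x))
    (ha2 g fun y => ⟨hg0 y, hgf y⟩) hb fun y => hasSum_of_eq_tsum_tsum (hc y).1 (hc y).2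
end

section
/- Let Q be a q-matrix on F with the given block structure satisfying the f-modulated drift condition with data (b, K, v, f), and assume v is level-wise nondecreasing on F̄₀, i.e., v(k,j) ≤ v(k+1,j) for all k ≥ 1 and 0 ≤ j ≤ S₁. Fix n ≥ 1 and let ₙQ be the LC-block-augmented truncation of Q. Then: (i) for every x = (k,i) ∈ F the series Σ_{y∈F} ₙq(x;y) v(y) converges and Σ_{y∈F} ₙq(x;y) v(y) ≤ Σ_{y∈F} q(x;y) v(y) ≤ −f(x) + b·1[x ∈ F_K]; (ii) if moreover ₙπ : F → [0,∞) satisfies Σ_{x} ₙπ(x) = 1, Σ_{x} ₙπ(x) ₙq(x;y) = 0 for every y (absolutely convergent), and Σ_{x}Σ_{y} ₙπ(x)|ₙq(x;y)| v(y) < ∞, then Σ_{x} ₙπ(x) f(x) ≤ b. -/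
/-- The `f`-modulated drift condition with data `(b, K, v, f)`. -/
def DriftCond (S0 S1 : ℕ) (q : BState S0 S1 → BState S0 S1 → ℝ)
    (b : ℝ) (K : ℕ) (v f : BState S0 S1 → ℝ) : Prop :=
  0 < b ∧ (∀ x, 0 ≤ v x) ∧ (∀ x, 1 ≤ f x) ∧
    ∀ x : BState S0 S1, Summable (fun y => q x y * v y) ∧
      (∑' y, q x y * v y) ≤ - f x + b * (if x.1.1 ≤ K then 1 else 0)

section Summation

variable {α β 𝕜 : Type*} [NormedField 𝕜] [CompleteSpace 𝕜]

lemma hasSum_mul_of_hasSum_fiber {r : α → 𝕜} {v s : β → 𝕜} {T : α → β}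
    (hs : ∀ z, HasSum (fun y : T ⁻¹' {z} => r y) (s z))
    (h : Summable fun y => r y * v (T y)) :
    HasSum (fun z => s z * v z) (∑' y, r y * v (T y)) := by
  have hfiber (z : β) : ∑' y : T ⁻¹' {z}, r y * v (T y) = s z * v z := by
    rw [← ((hs z).mul_right (v z)).tsum_eq]
    exact tsum_congr fun y => by rw [show T y = z from y.2]
  simpa only [hfiber] using h.hasSum.tsum_fiberwise T

lemma hasSum_mul_tsum_mul {π : α → 𝕜} {A : α → β → 𝕜} {v : β → 𝕜}
    (h : Summable fun p : α × β => π p.1 * A p.1 p.2 * v p.2) :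
    HasSum (fun x => π x * ∑' y, A x y * v y) (∑' y, (∑' x, π x * A x y) * v y) := by
  have hexchange : ∑' y, (∑' x, π x * A x y) * v y = ∑' x, ∑' y, π x * A x y * v y := by
    simp only [← tsum_mul_right]
    exact h.tsum_comm
  simpa only [hexchange, ← tsum_mul_left, ← mul_assoc] using h.prod.hasSum

lemma summable_mul_comp_and_tsum_le {r v : α → ℝ} {T : α → α} (hr : ∀ y, T y ≠ y → 0 ≤ r y)
    (hv : ∀ y, 0 ≤ v y) (hT : ∀ y, v (T y) ≤ v y) (h : Summable fun y => r y * v y) :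
    (Summable fun y => r y * v (T y)) ∧ ∑' y, r y * v (T y) ≤ ∑' y, r y * v y := by
  have hsum : Summable fun y => r y * v (T y) := by
    refine .of_norm_bounded h.norm fun y => ?_
    rw [norm_mul, norm_mul, Real.norm_of_nonneg (hv _), Real.norm_of_nonneg (hv _)]
    exact mul_le_mul_of_nonneg_left (hT y) (norm_nonneg _)
  refine ⟨hsum, hsum.tsum_le_tsum (fun y => ?_) h⟩
  by_cases hy : T y = y
  · rw [hy]
  · exact mul_le_mul_of_nonneg_left (hT y) (hr y hy)

lemma summable_mul_and_tsum_le_of_drift {π f g : α → ℝ} {A : α → β → ℝ} {v : β → ℝ}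
    (hπ : ∀ x, 0 ≤ π x) (hf : ∀ x, 0 ≤ f x) (hv : ∀ y, 0 ≤ v y)
    (hdrift : ∀ x, ∑' y, A x y * v y ≤ g x - f x) (hπA : ∀ y, 0 ≤ ∑' x, π x * A x y)
    (hg : Summable fun x => π x * g x)
    (hA : Summable fun p : α × β => π p.1 * A p.1 p.2 * v p.2) :
    (Summable fun x => π x * f x) ∧ ∑' x, π x * f x ≤ ∑' x, π x * g x := by
  have hAv := hasSum_mul_tsum_mul hA
  have hπAv : 0 ≤ ∑' y, (∑' x, π x * A x y) * v y :=
    tsum_nonneg fun y => mul_nonneg (hπA y) (hv y)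
  have hle (x : α) : π x * f x ≤ π x * g x - π x * ∑' y, A x y * v y := by
    rw [← mul_sub]
    exact mul_le_mul_of_nonneg_left (by linarith [hdrift x]) (hπ x)
  have hsub := hg.hasSum.sub hAv
  have hπf : Summable fun x => π x * f x :=
    .of_nonneg_of_le (fun x => mul_nonneg (hπ x) (hf x)) hle hsub.summable
  exact ⟨hπf, (hasSum_le hle hπf.hasSum hsub).trans (sub_le_self _ hπAv)⟩

lemma IsQMatrix.summable {q : α → α → ℝ} (hq : IsQMatrix q) (x : α) : Summable (q x) :=
  (Set.finite_singleton x).summable_compl_iff.1 (hq.2 x).1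

end Summation

section BlockStructure

variable {S0 S1 : ℕ}

namespace BState

lemma snd_le {y : BState S0 S1} (hy : y.1.1 ≠ 0) : y.1.2 ≤ S1 := by
  simpa only [if_neg hy] using y.2

/-- The map along which the augmentation of `ₙQ` moves the rates out of a state of level `k`: it
lowers `(m, j)` to `(n, j)` when `m > n` and `m ≠ k`, and fixes every other state. The proof `hn` is
an argument because `(0, j)` need not be a state. -/
def lower {n : ℕ} (hn : 1 ≤ n) (k : ℕ) (y : BState S0 S1) : BState S0 S1 :=
  if h : n < y.1.1 ∧ y.1.1 ≠ k then
    ⟨(n, y.1.2), by simpa only [if_neg (Nat.ne_of_gt hn)] using snd_le (Nat.ne_zero_of_lt h.1)⟩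
  else y

lemma lower_of_not {n k : ℕ} (hn : 1 ≤ n) {y : BState S0 S1} (h : ¬(n < y.1.1 ∧ y.1.1 ≠ k)) :
    lower hn k y = y :=
  dif_neg h

lemma coe_lower {n k : ℕ} (hn : 1 ≤ n) {y : BState S0 S1} (h : n < y.1.1 ∧ y.1.1 ≠ k) :
    (lower hn k y).1 = (n, y.1.2) := by
  rw [lower, dif_pos h]

lemma lower_self {n : ℕ} (hn : 1 ≤ n) (x : BState S0 S1) : lower hn x.1.1 x = x :=
  lower_of_not hn fun h => h.2 rfl

lemma lower_eq_iff {n k : ℕ} (hn : 1 ≤ n) {y z : BState S0 S1} :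
    lower hn k y = z ↔
      (¬(n < z.1.1 ∧ z.1.1 ≠ k) ∧ y = z) ∨
        (z.1.1 = n ∧ (n < y.1.1 ∧ y.1.1 ≠ k) ∧ y.1.2 = z.1.2) := by
  by_cases hy : n < y.1.1 ∧ y.1.1 ≠ k
  · rw [Subtype.ext_iff, coe_lower hn hy, Prod.ext_iff]
    grind
  · rw [lower_of_not hn hy]
    grind

end BState

lemma DriftCond.tsum_le_sub {q : BState S0 S1 → BState S0 S1 → ℝ} {b : ℝ} {K : ℕ}
    {v f : BState S0 S1 → ℝ} (h : DriftCond S0 S1 q b K v f) (x : BState S0 S1) :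
    ∑' y, q x y * v y ≤ b - f x := by
  obtain ⟨hb, -, -, hdrift⟩ := h
  have hx := (hdrift x).2
  split_ifs at hx <;> linarith

lemma vAt_coe (v : BState S0 S1 → ℝ) (y : BState S0 S1) : vAt S0 S1 v y.1.1 y.1.2 = v y :=
  dif_pos y.2

lemma apply_le_apply_of_level_le {v : BState S0 S1 → ℝ}
    (hmono : ∀ k j : ℕ, 1 ≤ k → j ≤ S1 → vAt S0 S1 v k j ≤ vAt S0 S1 v (k + 1) j)
    {y z : BState S0 S1} (hy : 1 ≤ y.1.1) (hyz : y.1.1 ≤ z.1.1) (hsnd : y.1.2 = z.1.2) :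
    v y ≤ v z := by
  have hcol : MonotoneOn (fun k => vAt S0 S1 v k y.1.2) (Set.Ici 1) :=
    monotoneOn_nat_Ici_of_le_succ fun k hk => hmono k _ hk (BState.snd_le (Nat.ne_of_gt hy))
  calc v y = vAt S0 S1 v y.1.1 y.1.2 := (vAt_coe v y).symm
    _ ≤ vAt S0 S1 v z.1.1 y.1.2 := hcol hy (hy.trans hyz) hyz
    _ = v z := by rw [hsnd, vAt_coe]

lemma apply_lower_le {v : BState S0 S1 → ℝ}
    (hmono : ∀ k j : ℕ, 1 ≤ k → j ≤ S1 → vAt S0 S1 v k j ≤ vAt S0 S1 v (k + 1) j)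
    {n : ℕ} (hn : 1 ≤ n) (k : ℕ) (y : BState S0 S1) : v (BState.lower hn k y) ≤ v y := by
  by_cases h : n < y.1.1 ∧ y.1.1 ≠ k
  · have hcoe := BState.coe_lower hn h
    exact apply_le_apply_of_level_le hmono (by rwa [hcoe]) (by rw [hcoe]; exact h.1.le)
      (by rw [hcoe])
  · rw [BState.lower_of_not hn h]

lemma hasSum_column_iff (r : BState S0 S1 → ℝ) (P : ℕ → Prop) [DecidablePred P] (j : ℕ) (a : ℝ) :
    HasSum ({y : BState S0 S1 | P y.1.1 ∧ y.1.2 = j}.indicator r) a ↔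
      HasSum (fun m : ℕ =>
        if h : P m ∧ j ≤ (if m = 0 then S0 else S1) then r ⟨(m, j), h.2⟩ else 0) a := by
  let column : Set (BState S0 S1) := {y | y.1.2 = j}
  have hinj : Function.Injective fun y : column => y.1.1.1 := fun y z h =>
    Subtype.ext (Subtype.ext (Prod.ext h (y.2.trans z.2.symm)))
  rw [← hinj.hasSum_iff, ← hasSum_subtype_iff_of_support_subset (s := column)]
  · refine iff_of_eq (congrArg (HasSum · a) (funext ?_))
    rintro ⟨⟨⟨m, i⟩, hm⟩, hi⟩
    obtain rfl : i = j := hi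
    have hm' : i ≤ if m = 0 then S0 else S1 := hm
    by_cases hP : P m <;> simp [hP, hm']
  · exact Set.support_indicator_subset.trans fun y hy => hy.2
  · intro m hm
    exact dif_neg fun h => hm ⟨⟨⟨(m, j), h.2⟩, rfl⟩, rfl⟩

lemma LCtrunc_eq_add (n : ℕ) (q : BState S0 S1 → BState S0 S1 → ℝ) (x z : BState S0 S1) :
    LCtrunc S0 S1 n q x z = (if n < z.1.1 ∧ z.1.1 ≠ x.1.1 then 0 else q x z) +
      if z.1.1 = n then
        ∑' m : ℕ, if h : (n < m ∧ m ≠ x.1.1) ∧ z.1.2 ≤ (if m = 0 then S0 else S1)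
          then q x ⟨(m, z.1.2), h.2⟩ else 0
      else 0 := by
  unfold LCtrunc
  rcases lt_trichotomy z.1.1 n with h | h | h
  · simp [h, h.ne, h.not_gt]
  · simp [h]
  · simp [h, h.ne', h.not_gt, ite_not]

lemma hasSum_lower_fiber_LCtrunc {q : BState S0 S1 → BState S0 S1 → ℝ} {x : BState S0 S1}
    (hq : Summable (q x)) {n : ℕ} (hn : 1 ≤ n) (z : BState S0 S1) :
    HasSum (fun y : BState.lower hn x.1.1 ⁻¹' {z} => q x y) (LCtrunc S0 S1 n q x z) := by
  let movedColumn : Set (BState S0 S1) := {y | (n < y.1.1 ∧ y.1.1 ≠ x.1.1) ∧ y.1.2 = z.1.2}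
  have hindicator : (BState.lower hn x.1.1 ⁻¹' {z}).indicator (q x) = fun y =>
      (if y = z then if n < z.1.1 ∧ z.1.1 ≠ x.1.1 then 0 else q x z else 0) +
        if z.1.1 = n then movedColumn.indicator (q x) y else 0 := by
    classical
    funext y
    simp only [Set.indicator_apply, Set.mem_preimage, Set.mem_singleton_iff,
      BState.lower_eq_iff, movedColumn, Set.mem_ofPred_eq]
    grind
  have hcolumn := (hq.indicator movedColumn).hasSum
  have hcolumn_tsum :=
    ((hasSum_column_iff (q x) (fun m => n < m ∧ m ≠ x.1.1) z.1.2 _).1 hcolumn).tsum_eq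
  rw [← Function.comp_def, hasSum_subtype_iff_indicator, hindicator, LCtrunc_eq_add, hcolumn_tsum]
  refine (hasSum_ite_eq z _).add ?_
  split_ifs
  · exact hcolumn
  · exact hasSum_zero

lemma summable_LCtrunc_mul_and_tsum_le {q : BState S0 S1 → BState S0 S1 → ℝ}
    {v : BState S0 S1 → ℝ} {x : BState S0 S1} (hq : ∀ y, x ≠ y → 0 ≤ q x y)
    (hqs : Summable (q x)) (hv : ∀ y, 0 ≤ v y)
    (hmono : ∀ k j : ℕ, 1 ≤ k → j ≤ S1 → vAt S0 S1 v k j ≤ vAt S0 S1 v (k + 1) j)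
    {n : ℕ} (hn : 1 ≤ n) (hqv : Summable fun y => q x y * v y) :
    (Summable fun y => LCtrunc S0 S1 n q x y * v y) ∧
      ∑' y, LCtrunc S0 S1 n q x y * v y ≤ ∑' y, q x y * v y := by
  have hmoved (y : BState S0 S1) (hy : BState.lower hn x.1.1 y ≠ y) : 0 ≤ q x y :=
    hq y fun hxy => hy (hxy ▸ BState.lower_self hn x)
  obtain ⟨hsum, hle⟩ :=
    summable_mul_comp_and_tsum_le hmoved hv (apply_lower_le hmono hn x.1.1) hqv
  have hLC := hasSum_mul_of_hasSum_fiber (hasSum_lower_fiber_LCtrunc hqs hn) hsum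
  exact ⟨hLC.summable, hLC.tsum_eq.trans_le hle⟩

theorem stmt6_general {q : BState S0 S1 → BState S0 S1 → ℝ} {v f g : BState S0 S1 → ℝ}
    (hq : ∀ x y, x ≠ y → 0 ≤ q x y) (hqs : ∀ x, Summable (q x))
    (hv : ∀ x, 0 ≤ v x) (hf : ∀ x, 0 ≤ f x) (hqv : ∀ x, Summable fun y => q x y * v y)
    (hdrift : ∀ x, ∑' y, q x y * v y ≤ g x - f x)
    (hmono : ∀ k j : ℕ, 1 ≤ k → j ≤ S1 → vAt S0 S1 v k j ≤ vAt S0 S1 v (k + 1) j)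
    {n : ℕ} (hn : 1 ≤ n) :
    (∀ x, (Summable fun y => LCtrunc S0 S1 n q x y * v y) ∧
      ∑' y, LCtrunc S0 S1 n q x y * v y ≤ ∑' y, q x y * v y) ∧
    ∀ π : BState S0 S1 → ℝ, (∀ x, 0 ≤ π x) → (Summable fun x => π x * g x) →
      (∀ y, 0 ≤ ∑' x, π x * LCtrunc S0 S1 n q x y) →
      (Summable fun p : BState S0 S1 × BState S0 S1 =>
        π p.1 * |LCtrunc S0 S1 n q p.1 p.2| * v p.2) →
      (Summable fun x => π x * f x) ∧ ∑' x, π x * f x ≤ ∑' x, π x * g x := by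
  have hrow (x) := summable_LCtrunc_mul_and_tsum_le (hq x) (hqs x) hv hmono hn (hqv x)
  refine ⟨hrow, fun π hπ hg hexc habs => summable_mul_and_tsum_le_of_drift hπ hf hv
    (fun x => (hrow x).2.trans (hdrift x)) hexc hg (.of_abs (habs.congr fun p => ?_))⟩
  rw [abs_mul, abs_mul, abs_of_nonneg (hπ _), abs_of_nonneg (hv _)]

end BlockStructure

/-- Second part of the paper's Lemma 2.4, together with the key intermediate
inequality `ₙQ v ≤ Q v`: if `v` is level-wise nondecreasing on `F̄₀`, then
(i) `ₙQ v ≤ Q v ≤ -f + b 1_{F_K}` and (ii) any stationary distribution vector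
`ₙπ` of `ₙQ` satisfies `ₙπ f ≤ b`. -/
theorem stmt6 (S0 S1 : ℕ) (q : BState S0 S1 → BState S0 S1 → ℝ)
    (b : ℝ) (K : ℕ) (v f : BState S0 S1 → ℝ)
    (hq : IsQMatrix q) (hdrift : DriftCond S0 S1 q b K v f)
    (hmono : ∀ k j : ℕ, 1 ≤ k → j ≤ S1 → vAt S0 S1 v k j ≤ vAt S0 S1 v (k + 1) j)
    (n : ℕ) (hn : 1 ≤ n) :
    (∀ x : BState S0 S1,
      Summable (fun y => LCtrunc S0 S1 n q x y * v y) ∧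
      (∑' y, LCtrunc S0 S1 n q x y * v y) ≤ (∑' y, q x y * v y) ∧
      (∑' y, q x y * v y) ≤ - f x + b * (if x.1.1 ≤ K then 1 else 0)) ∧
    (∀ npi : BState S0 S1 → ℝ, (∀ x, 0 ≤ npi x) → (∑' x, npi x) = 1 →
      (∀ y, Summable (fun x => |npi x * LCtrunc S0 S1 n q x y|) ∧
        (∑' x, npi x * LCtrunc S0 S1 n q x y) = 0) →
      Summable (fun p : BState S0 S1 × BState S0 S1 =>
        npi p.1 * |LCtrunc S0 S1 n q p.1 p.2| * v p.2) →
      Summable (fun x => npi x * f x) ∧ (∑' x, npi x * f x) ≤ b) := by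
  have ⟨_, hv, hf, hd⟩ := hdrift
  obtain ⟨hrow, hstat⟩ := stmt6_general hq.1 hq.summable hv (fun x => zero_le_one.trans (hf x))
    (fun x => (hd x).1) hdrift.tsum_le_sub hmono hn
  refine ⟨fun x => ⟨(hrow x).1, (hrow x).2, (hd x).2⟩, fun npi hnpi hone hinv habs => ?_⟩
  -- `∑'` is `0` on a family that is not summable, so a sum equal to `1` forces summability.
  have hsummable : Summable npi :=
    by_contra fun h => one_ne_zero (hone.symm.trans (tsum_eq_zero_of_not_summable h))
  simpa only [tsum_mul_right, hone, one_mul] using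
    hstat npi hnpi (hsummable.mul_right b) (fun y => (hinv y).2.ge) habs
end
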